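/- (Theorem 2.1(e)) Let G ⊆ [0,∞) be a Borel set and β ∈ (0, d). Assume the Khoshnevisan–Xiao equivalence holds for X, i.e., C_β(X(G)) = 0 P-almost surely if and only if for every μ ∈ P(G), ∫_{ℝ^d} [∫∫_{G×G} Re χ_ξ(t−s) μ(dt) μ(ds)] ‖ξ‖^{β−d} dξ = +∞ (here X(G) = {X_t(ω) : t ∈ G} is the random image set and C_β is the capacity on Borel subsets of ℝ^d with kernel z ↦ ‖z‖^{−β}). If C_{g_{d−β,+}}(G) = 0 and for every μ ∈ P(G), ∫_{ℝ^d} [∫∫_{G×G} max(−Re χ_ξ(t−s), 0) μ(dt) μ(ds)] ‖ξ‖^{β−d} dξ < +∞, then C_β(X(G)) = 0 P-almost surely. -/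

import Mathlib

open MeasureTheory Complex
open scoped RealInnerProductSpace ENNReal

noncomputable section

/-- `χ_ξ(x) = exp(−|x| Ψ(sign(x) ξ))`. -/
def chi {d : ℕ} (Ψ : EuclideanSpace ℝ (Fin d) → ℂ) (ξ : EuclideanSpace ℝ (Fin d)) (x : ℝ) : ℂ :=
  Complex.exp (((-|x| : ℝ) : ℂ) * Ψ (Real.sign x • ξ))

/-- `g_{γ,+}(x) = ∫_{ℝ^d} (Re χ_ξ(x))_+ ‖ξ‖^{−γ} dξ`, with values in `[0,∞]`. -/
def gplus {d : ℕ} (Ψ : EuclideanSpace ℝ (Fin d) → ℂ) (γ : ℝ) (x : ℝ) : ℝ≥0∞ :=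
  ∫⁻ ξ : EuclideanSpace ℝ (Fin d),
    ENNReal.ofReal (max ((chi Ψ ξ x).re) 0) * (ENNReal.ofReal ‖ξ‖) ^ (-γ) ∂volume

/-- `g_{γ,−}(x) = ∫_{ℝ^d} (Re χ_ξ(x))_− ‖ξ‖^{−γ} dξ`, with values in `[0,∞]`. -/
def gminus {d : ℕ} (Ψ : EuclideanSpace ℝ (Fin d) → ℂ) (γ : ℝ) (x : ℝ) : ℝ≥0∞ :=
  ∫⁻ ξ : EuclideanSpace ℝ (Fin d),
    ENNReal.ofReal (max (-(chi Ψ ξ x).re) 0) * (ENNReal.ofReal ‖ξ‖) ^ (-γ) ∂volume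

/-- The `f`-energy `E_f(μ) = ∫∫_{G×G} f(t−s) μ(dt)μ(ds)` of a measure on `ℝ`,
for a `[0,∞]`-valued kernel `f`. -/
def energyR (f : ℝ → ℝ≥0∞) (G : Set ℝ) (μ : Measure ℝ) : ℝ≥0∞ :=
  ∫⁻ t in G, ∫⁻ s in G, f (t - s) ∂μ ∂μ

/-- The `f`-capacity `C_f(G) = [inf_{μ ∈ P(G)} E_f(μ)]⁻¹` (with `1/∞ = 0`), the infimum
being over Borel probability measures supported in `G`. -/
def capacityR (f : ℝ → ℝ≥0∞) (G : Set ℝ) : ℝ≥0∞ :=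
  (⨅ (μ : Measure ℝ) (_ : IsProbabilityMeasure μ ∧ μ Gᶜ = 0), energyR f G μ)⁻¹

/-- The Bessel–Riesz capacity `C_β(B) = [inf_ν ∫∫_{B×B} ‖x−y‖^{−β} ν(dx)ν(dy)]⁻¹` on Borel
subsets of `ℝ^d`, the infimum over Borel probability measures supported in `B`. -/
def capacityBeta {d : ℕ} (β : ℝ) (B : Set (EuclideanSpace ℝ (Fin d))) : ℝ≥0∞ :=
  (⨅ (ν : Measure (EuclideanSpace ℝ (Fin d))) (_ : IsProbabilityMeasure ν ∧ ν Bᶜ = 0),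
    ∫⁻ x in B, ∫⁻ y in B, (ENNReal.ofReal ‖x - y‖) ^ (-β) ∂ν ∂ν)⁻¹

theorem measurable_sign_aux : Measurable Real.sign := by
  have : Real.sign = fun r : ℝ => if r < 0 then (-1 : ℝ) else if 0 < r then 1 else 0 := by
    funext r; rfl
  rw [this]
  exact Measurable.ite measurableSet_Iio measurable_const
    (Measurable.ite measurableSet_Ioi measurable_const measurable_const)

theorem measurable_chi_aux {d : ℕ} (Ψ : EuclideanSpace ℝ (Fin d) → ℂ) (hΨ : Measurable Ψ) :
    Measurable fun p : EuclideanSpace ℝ (Fin d) × (ℝ × ℝ) => (chi Ψ p.1 (p.2.1 - p.2.2)).re := by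
  unfold chi
  have h1 : Measurable fun p : EuclideanSpace ℝ (Fin d) × (ℝ × ℝ) => p.2.1 - p.2.2 := by fun_prop
  have h2 : Measurable fun p : EuclideanSpace ℝ (Fin d) × (ℝ × ℝ) =>
      Real.sign (p.2.1 - p.2.2) • p.1 := (measurable_sign_aux.comp h1).smul measurable_fst
  have h3 := hΨ.comp h2
  have h4 : Measurable fun p : EuclideanSpace ℝ (Fin d) × (ℝ × ℝ) =>
      (((-|p.2.1 - p.2.2| : ℝ)) : ℂ) :=
    Complex.measurable_ofReal.comp (by
      have := h1.norm
      simp only [Real.norm_eq_abs] at this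
      exact this.neg)
  exact Complex.measurable_re.comp (Complex.measurable_exp.comp (h4.mul h3))

theorem pos_le_aux {α : Type*} [MeasurableSpace α] (m : Measure α) (f : α → ℝ)
    (hf : Integrable f m) :
    ∫⁻ x, ENNReal.ofReal (max (f x) 0) ∂m ≤ ENNReal.ofReal (∫ x, f x ∂m)
      + ∫⁻ x, ENNReal.ofReal (max (-f x) 0) ∂m := by
  have e : ∀ y : ℝ, ENNReal.ofReal (max y 0) = ENNReal.ofReal y := by
    intro y; rw [ENNReal.ofReal_max]; simp
  simp only [e]
  have hp : ∫⁻ x, ENNReal.ofReal (f x) ∂m ≠ ⊤ := hf.lintegral_lt_top.ne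
  have hn : ∫⁻ x, ENNReal.ofReal (-f x) ∂m ≠ ⊤ := hf.neg.lintegral_lt_top.ne
  rw [integral_eq_lintegral_pos_part_sub_lintegral_neg_part hf,
    ENNReal.ofReal_sub _ ENNReal.toReal_nonneg, ENNReal.ofReal_toReal hp, ENNReal.ofReal_toReal hn]
  exact le_tsub_add

set_option maxHeartbeats 1000000 in
/-- **Theorem 2.1(e).** Assume the Khoshnevisan–Xiao equivalence for `X`.
If `C_{g_{d−β,+}}(G) = 0` and `∫_{ℝ^d} E_{(Re χ_ξ)_−}(μ) ‖ξ‖^{β−d} dξ < ∞` for every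
`μ ∈ P(G)`, then `C_β(X(G)) = 0` `P`-almost surely. -/
theorem stmt10 {d : ℕ} (hd : 1 ≤ d) (Ψ : EuclideanSpace ℝ (Fin d) → ℂ) (hΨ : Measurable Ψ)
    {Ω : Type*} [MeasurableSpace Ω] (P : Measure Ω) [IsProbabilityMeasure P]
    (X : ℝ → Ω → EuclideanSpace ℝ (Fin d))
    (hXmeas : Measurable fun p : ℝ × Ω => X p.1 p.2)
    (hX : ∀ s t : ℝ, 0 ≤ s → s ≤ t → ∀ ξ : EuclideanSpace ℝ (Fin d),
      ∫ ω, Complex.exp ((⟪ξ, X t ω - X s ω⟫ : ℂ) * Complex.I) ∂P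
        = Complex.exp (((-(t - s) : ℝ) : ℂ) * Ψ ξ))
    (G : Set ℝ) (hG : MeasurableSet G) (hG0 : G ⊆ Set.Ici 0)
    (β : ℝ) (hβ0 : 0 < β) (hβd : β < d)
    (hKX : (∀ᵐ ω ∂P, capacityBeta β ((fun t => X t ω) '' G) = 0) ↔
      (∀ μ : Measure ℝ, IsProbabilityMeasure μ → μ Gᶜ = 0 →
        ∫⁻ ξ : EuclideanSpace ℝ (Fin d),
          ENNReal.ofReal (∫ t in G, ∫ s in G, (chi Ψ ξ (t - s)).re ∂μ ∂μ)
            * (ENNReal.ofReal ‖ξ‖) ^ (β - d) ∂volume = ⊤))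
    (hcap0 : capacityR (gplus Ψ ((d : ℝ) - β)) G = 0)
    (hminus : ∀ μ : Measure ℝ, IsProbabilityMeasure μ → μ Gᶜ = 0 →
      ∫⁻ ξ : EuclideanSpace ℝ (Fin d),
        (∫⁻ t in G, ∫⁻ s in G, ENNReal.ofReal (max (-(chi Ψ ξ (t - s)).re) 0) ∂μ ∂μ)
          * (ENNReal.ofReal ‖ξ‖) ^ (β - d) ∂volume < ⊤) :
    ∀ᵐ ω ∂P, capacityBeta β ((fun t => X t ω) '' G) = 0 := by
  rw [hKX]
  intro μ hμ hμG
  have hb : ∀ ξ x, ‖(chi Ψ ξ x).re‖ ≤ 1 := by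
    intro ξ x
    refine (Complex.abs_re_le_norm _).trans ?_
    have h := hX 0 |x| le_rfl (abs_nonneg x) (Real.sign x • ξ)
    rw [sub_zero] at h
    unfold chi
    rw [← h]
    refine (norm_integral_le_of_norm_le_const (C := 1) (Filter.Eventually.of_forall ?_)).trans ?_
    · intro ω
      exact (Complex.norm_exp_ofReal_mul_I _).le
    · simp
  have hE : energyR (gplus Ψ ((d : ℝ) - β)) G μ = ⊤ := by
    unfold capacityR at hcap0
    rw [ENNReal.inv_eq_zero] at hcap0
    simp only [iInf_eq_top] at hcap0
    exact hcap0 μ ⟨hμ, hμG⟩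
  have hB := hminus μ hμ hμG
  have hM := measurable_chi_aux Ψ hΨ
  unfold energyR gplus at hE
  rw [neg_sub] at hE
  set M := μ.restrict G with hMdef
  have hw : Measurable fun ξ : EuclideanSpace ℝ (Fin d) =>
      (ENNReal.ofReal ‖ξ‖) ^ (β - d) := by fun_prop
  have hpos : Measurable fun p : EuclideanSpace ℝ (Fin d) × (ℝ × ℝ) =>
      ENNReal.ofReal (max (chi Ψ p.1 (p.2.1 - p.2.2)).re 0) :=
    (hM.max measurable_const).ennreal_ofReal
  have hneg : Measurable fun p : EuclideanSpace ℝ (Fin d) × (ℝ × ℝ) =>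
      ENNReal.ofReal (max (-(chi Ψ p.1 (p.2.1 - p.2.2)).re) 0) :=
    (hM.neg.max measurable_const).ennreal_ofReal
  have hsec : ∀ ξ : EuclideanSpace ℝ (Fin d),
      Measurable fun p : ℝ × ℝ => (chi Ψ ξ (p.1 - p.2)).re :=
    fun ξ => hM.comp (measurable_prodMk_left (x := ξ))
  have hnsec : ∀ ξ : EuclideanSpace ℝ (Fin d),
      Measurable fun p : ℝ × ℝ => ENNReal.ofReal (max (-(chi Ψ ξ (p.1 - p.2)).re) 0) :=
    fun ξ => ((hsec ξ).neg.max measurable_const).ennreal_ofReal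
  -- pointwise inequality
  have key : ∀ ξ : EuclideanSpace ℝ (Fin d),
      ∫⁻ p, ENNReal.ofReal (max (chi Ψ ξ (p.1 - p.2)).re 0) ∂(M.prod M) ≤
      ENNReal.ofReal (∫ t, ∫ s, (chi Ψ ξ (t - s)).re ∂M ∂M)
        + ∫⁻ t, ∫⁻ s, ENNReal.ofReal (max (-(chi Ψ ξ (t - s)).re) 0) ∂M ∂M := by
    intro ξ
    have hmξ := hsec ξ
    have hint : Integrable (fun p : ℝ × ℝ => (chi Ψ ξ (p.1 - p.2)).re) (M.prod M) :=
      Integrable.of_bound hmξ.aestronglyMeasurable 1 (Filter.Eventually.of_forall fun p => hb _ _)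
    have h := pos_le_aux (M.prod M) _ hint
    rw [integral_prod _ hint, lintegral_prod (fun p : ℝ × ℝ =>
      ENNReal.ofReal (max (-(chi Ψ ξ (p.1 - p.2)).re) 0))
      (hnsec ξ).aemeasurable] at h
    exact h
  -- Tonelli
  have hA : ∫⁻ ξ : EuclideanSpace ℝ (Fin d),
      (∫⁻ p, ENNReal.ofReal (max (chi Ψ ξ (p.1 - p.2)).re 0) ∂(M.prod M))
        * (ENNReal.ofReal ‖ξ‖) ^ (β - d) = ⊤ := by
    have hFm : Measurable fun q : EuclideanSpace ℝ (Fin d) × (ℝ × ℝ) =>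
        ENNReal.ofReal (max (chi Ψ q.1 (q.2.1 - q.2.2)).re 0)
          * (ENNReal.ofReal ‖q.1‖) ^ (β - d) := hpos.mul (hw.comp measurable_fst)
    rw [← hE, ← lintegral_prod (fun p : ℝ × ℝ => ∫⁻ ξ : EuclideanSpace ℝ (Fin d),
      ENNReal.ofReal (max (chi Ψ ξ (p.1 - p.2)).re 0) * (ENNReal.ofReal ‖ξ‖) ^ (β - d))
      (Measurable.lintegral_prod_left' hFm).aemeasurable]
    rw [← lintegral_lintegral_swap (f := fun (ξ : EuclideanSpace ℝ (Fin d)) (p : ℝ × ℝ) =>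
      ENNReal.ofReal (max (chi Ψ ξ (p.1 - p.2)).re 0) * (ENNReal.ofReal ‖ξ‖) ^ (β - d))
      hFm.aemeasurable]
    refine lintegral_congr fun ξ => ?_
    have hc : Measurable fun p : ℝ × ℝ => ENNReal.ofReal (max (chi Ψ ξ (p.1 - p.2)).re 0) :=
      ((hsec ξ).max measurable_const).ennreal_ofReal
    exact (lintegral_mul_const _ hc).symm
  have hBm : Measurable fun ξ : EuclideanSpace ℝ (Fin d) =>
      (∫⁻ t, ∫⁻ s, ENNReal.ofReal (max (-(chi Ψ ξ (t - s)).re) 0) ∂M ∂M)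
        * (ENNReal.ofReal ‖ξ‖) ^ (β - d) := by
    refine Measurable.mul ?_ hw
    have h := Measurable.lintegral_prod_right' (ν := M.prod M) hneg
    convert h using 2 with ξ
    exact (lintegral_prod (fun p : ℝ × ℝ =>
      ENNReal.ofReal (max (-(chi Ψ ξ (p.1 - p.2)).re) 0))
      (hnsec ξ).aemeasurable).symm
  by_contra hne
  have hle := lintegral_mono (μ := volume) fun ξ : EuclideanSpace ℝ (Fin d) =>
    mul_le_mul_left (key ξ) ((ENNReal.ofReal ‖ξ‖) ^ (β - d))
  simp only [add_mul] at hle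
  rw [hA, lintegral_add_right _ hBm, top_le_iff, ENNReal.add_eq_top] at hle
  exact hle.elim hne hB.ne
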